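/- Let δ ∈ D_0 with Σ_δ = {0,1} and let c_δ(x) = b(max(x))·∏_{x_i ≠ max(x)} a(x_i) be the associated density. Then the diagonal section of the copula with density c_δ equals δ: for every r ∈ [0,1], ∫_{[0,1]^d} c_δ(u) 1{max(u) ≤ r} du = δ(r). -/

import Mathlib

open MeasureTheory Set
open scoped Classical
open Filter Topology
open scoped NNReal

/-!
Ties have measure zero, so the density splits according to the coordinate at which the maximum is
attained. By Fubini each of the `d` pieces integrates to `∫ t in 0..r, b t * A t ^ (d - 1)`, where
`A t = ∫ s in 0..t, a s`. The function `A = h ^ (1 / d) * exp F` is a primitive of `a` vanishing at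
`0`: on differentiating, the term `F' = (d - 1) / (d * h)` turns `1 - δ'` into `d - δ'`, and near
`0` the factor `exp F` is at most `1` because `F` vanishes at `1 / 2` and increases. In
`b * A ^ (d - 1)` the powers of `h` and the exponentials cancel, leaving `δ' / d`, whose integral
over `[0, r]` is `δ r / d`.
-/

lemma ae_injective_pi {α : Type*} [MeasurableSpace α] [MeasurableEq α] {n : ℕ} (μ : Measure α)
    [SigmaFinite μ] [NullSingletonClass μ] :
    ∀ᵐ u ∂Measure.pi fun _ : Fin n ↦ μ, Function.Injective u := by
  cases n with
  | zero => exact .of_forall fun u ↦ Function.injective_of_subsingleton u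
  | succ n =>
    have hne (i : Fin (n + 1)) (k : Fin n) :
        ∀ᵐ u ∂Measure.pi fun _ : Fin (n + 1) ↦ μ, u (i.succAbove k) ≠ u i := by
      have hsplit : ∀ᵐ p ∂μ.prod (Measure.pi fun _ : Fin n ↦ μ), p.2 k ≠ p.1 := by
        have hmeas : MeasurableSet {p : α × (Fin n → α) | p.2 k = p.1} :=
          measurableSet_eq_fun (by fun_prop) (by fun_prop)
        exact (Measure.ae_prod_iff_ae_ae hmeas.compl).2 <|
          .of_forall (Measure.ae_eval_ne (fun _ ↦ μ) k)
      exact (measurePreserving_piFinSuccAbove (fun _ ↦ μ) i).quasiMeasurePreserving.ae hsplit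
    filter_upwards [ae_all_iff.2 fun i ↦ ae_all_iff.2 (hne i)] with u hu i j hij
    by_contra hij'
    obtain ⟨k, rfl⟩ := Fin.exists_succAbove_eq hij'
    exact hu j k hij

lemma restrict_Iio_restrict_Ioo {α : Type*} [LinearOrder α] [TopologicalSpace α]
    [OrderClosedTopology α] [MeasurableSpace α] [OpensMeasurableSpace α] (μ : Measure α) {x y t : α}
    (hty : t ≤ y) : (μ.restrict (Ioo x y)).restrict (Iio t) = μ.restrict (Ioo x t) := by
  rw [Measure.restrict_restrict measurableSet_Iio, inter_comm, Ioo_inter_Iio, min_eq_right hty]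

section MaxProdAt

variable {α R 𝕜 : Type*} [LinearOrder α] [CommSemiring R] [RCLike 𝕜] {n : ℕ}

/-- The function `b(u_i) * ∏_{k ≠ i} a(u_k)` restricted to the vectors `u` whose coordinate `i` is
the strict maximum, and `0` elsewhere. The restriction is an indicator on each factor, so that for
fixed `u_i` the other coordinates separate. -/
noncomputable def maxProdAt (a b : α → R) (i : Fin (n + 1)) (u : Fin (n + 1) → α) : R :=
  b (u i) * ∏ k, (Iio (u i)).indicator a (u (i.succAbove k))

variable [MeasurableSpace α] [TopologicalSpace α] [OrderClosedTopology α]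
  [SecondCountableTopology α] [OpensMeasurableSpace α] {μ : Measure α} [SigmaFinite μ]
  {a b : α → 𝕜}

lemma aestronglyMeasurable_mul_prod_indicator_Iio (ha : AEStronglyMeasurable a μ)
    (hb : AEStronglyMeasurable b μ) :
    AEStronglyMeasurable (fun p : α × (Fin n → α) ↦ b p.1 * ∏ k, (Iio p.1).indicator a (p.2 k))
      (μ.prod (Measure.pi fun _ ↦ μ)) := by
  refine hb.comp_fst.mul (Finset.aestronglyMeasurable_fun_prod _ fun k _ ↦ ?_)
  have hak : AEStronglyMeasurable (fun p : α × (Fin n → α) ↦ a (p.2 k))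
      (μ.prod (Measure.pi fun _ ↦ μ)) :=
    (ha.comp_quasiMeasurePreserving
      (Measure.quasiMeasurePreserving_eval (fun _ ↦ μ) k)).comp_snd
  exact hak.indicator (s := {p | p.2 k < p.1}) (measurableSet_lt (by fun_prop) (by fun_prop))

lemma integrable_mul_prod_indicator_Iio (ha : AEStronglyMeasurable a μ)
    (hb : AEStronglyMeasurable b μ) (hInt : ∀ᵐ t ∂μ, IntegrableOn a (Iio t) μ)
    (hbound : Integrable (fun t ↦ ‖b t‖ * (∫ s in Iio t, ‖a s‖ ∂μ) ^ n) μ) :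
    Integrable (fun p : α × (Fin n → α) ↦ b p.1 * ∏ k, (Iio p.1).indicator a (p.2 k))
      (μ.prod (Measure.pi fun _ ↦ μ)) := by
  rw [integrable_prod_iff (aestronglyMeasurable_mul_prod_indicator_Iio ha hb)]
  refine ⟨?_, hbound.congr <| .of_forall fun t ↦ ?_⟩
  · filter_upwards [hInt] with t ht
    exact (Integrable.fintype_prod fun _ ↦ ht.integrable_indicator measurableSet_Iio).const_mul _
  · simp only [norm_mul, norm_prod, norm_indicator_eq_indicator_norm]
    rw [integral_const_mul, integral_fintype_prod_eq_pow, integral_indicator measurableSet_Iio,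
      Fintype.card_fin]

lemma integrable_maxProdAt (ha : AEStronglyMeasurable a μ)
    (hb : AEStronglyMeasurable b μ) (hInt : ∀ᵐ t ∂μ, IntegrableOn a (Iio t) μ)
    (hbound : Integrable (fun t ↦ ‖b t‖ * (∫ s in Iio t, ‖a s‖ ∂μ) ^ n) μ) (i : Fin (n + 1)) :
    Integrable (maxProdAt a b i) (Measure.pi fun _ ↦ μ) := by
  have hsplit := measurePreserving_piFinSuccAbove (fun _ : Fin (n + 1) ↦ μ) i
  exact (hsplit.integrable_comp_emb (MeasurableEquiv.measurableEmbedding _)).2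
    (integrable_mul_prod_indicator_Iio ha hb hInt hbound)

lemma integral_maxProdAt (ha : AEStronglyMeasurable a μ)
    (hb : AEStronglyMeasurable b μ) (hInt : ∀ᵐ t ∂μ, IntegrableOn a (Iio t) μ)
    (hbound : Integrable (fun t ↦ ‖b t‖ * (∫ s in Iio t, ‖a s‖ ∂μ) ^ n) μ) (i : Fin (n + 1)) :
    ∫ u, maxProdAt a b i u ∂Measure.pi (fun _ ↦ μ) =
      ∫ t, b t * (∫ s in Iio t, a s ∂μ) ^ n ∂μ := by
  have hsplit := measurePreserving_piFinSuccAbove (fun _ : Fin (n + 1) ↦ μ) i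
  calc ∫ u, maxProdAt a b i u ∂Measure.pi (fun _ ↦ μ)
      = ∫ p : α × (Fin n → α), b p.1 * ∏ k, (Iio p.1).indicator a (p.2 k)
          ∂μ.prod (Measure.pi fun _ ↦ μ) :=
        hsplit.integral_comp' fun p : α × (Fin n → α) ↦
          b p.1 * ∏ k, (Iio p.1).indicator a (p.2 k)
    _ = ∫ t, ∫ v : Fin n → α, b t * ∏ k, (Iio t).indicator a (v k)
          ∂Measure.pi (fun _ ↦ μ) ∂μ :=
        integral_prod _ (integrable_mul_prod_indicator_Iio ha hb hInt hbound)
    _ = ∫ t, b t * (∫ s in Iio t, a s ∂μ) ^ n ∂μ := by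
        simp_rw [integral_const_mul, integral_fintype_prod_eq_pow,
          integral_indicator measurableSet_Iio, Fintype.card_fin]

end MaxProdAt

section MaxProd

variable {α R 𝕜 : Type*} [ConditionallyCompleteLinearOrder α] [CommSemiring R] [RCLike 𝕜] {n : ℕ}

/-- The function `c(u) = b(max u) * ∏_{u_i ≠ max u} a(u_i)`: the shape of the density `c_δ`, for
arbitrary `a` and `b`. Over a finite nonempty index type the supremum is the maximum. -/
noncomputable def maxProd {ι : Type*} [Fintype ι] (a b : α → R) (u : ι → α) : R :=
  b (⨆ i, u i) * ∏ i with u i ≠ ⨆ j, u j, a (u i)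

lemma maxProd_eq_sum_maxProdAt (a b : α → R) {u : Fin (n + 1) → α} (hu : Function.Injective u) :
    maxProd a b u = ∑ i, maxProdAt a b i u := by
  obtain ⟨m, hm⟩ := Finite.exists_max u
  have hsup : ⨆ i, u i = u m := (ciSup_le hm).antisymm (le_ciSup (finite_range u).bddAbove m)
  have hlt (k : Fin n) : u (m.succAbove k) < u m :=
    (hm _).lt_of_ne (hu.ne (m.succAbove_ne k))
  have hzero (i : Fin (n + 1)) (hi : i ≠ m) : maxProdAt a b i u = 0 := by
    obtain ⟨k, hk⟩ := Fin.exists_succAbove_eq hi.symm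
    exact mul_eq_zero_of_right _ <| Finset.prod_eq_zero (Finset.mem_univ k) <|
      indicator_of_notMem (by simpa [hk] using hm i) a
  have hcompl : ({i | u i ≠ u m} : Finset (Fin (n + 1))) = Finset.univ.map m.succAboveEmb := by
    ext i
    simp [hu.ne_iff, Fin.exists_succAbove_eq_iff]
  rw [Finset.sum_eq_single m (fun i _ hi ↦ hzero i hi) (by simp), maxProd,
    hsup, hcompl, Finset.prod_map]
  simp [maxProdAt, hlt]

variable [MeasurableSpace α] {μ : Measure α} [SigmaFinite μ] [NullSingletonClass μ]

lemma maxProd_ae_eq_sum_maxProdAt [MeasurableEq α] (a b : α → R) :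
    maxProd a b =ᵐ[Measure.pi fun _ : Fin (n + 1) ↦ μ] fun u ↦ ∑ i, maxProdAt a b i u :=
  (ae_injective_pi μ).mono fun _ ↦ maxProd_eq_sum_maxProdAt a b

theorem integral_maxProd [TopologicalSpace α] [OrderClosedTopology α]
    [SecondCountableTopology α] [OpensMeasurableSpace α] {a b : α → 𝕜}
    (ha : AEStronglyMeasurable a μ) (hb : AEStronglyMeasurable b μ)
    (hInt : ∀ᵐ t ∂μ, IntegrableOn a (Iio t) μ)
    (hbound : Integrable (fun t ↦ ‖b t‖ * (∫ s in Iio t, ‖a s‖ ∂μ) ^ n) μ) :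
    ∫ u : Fin (n + 1) → α, maxProd a b u ∂Measure.pi (fun _ ↦ μ) =
      (n + 1) * ∫ t, b t * (∫ s in Iio t, a s ∂μ) ^ n ∂μ := by
  rw [integral_congr_ae (maxProd_ae_eq_sum_maxProdAt a b),
    integral_finsetSum _ fun i _ ↦ integrable_maxProdAt ha hb hInt hbound i]
  simp [integral_maxProdAt ha hb hInt hbound]

end MaxProd

section FundamentalTheorem

variable {f f' : ℝ → ℝ} {x y : ℝ}

lemma absolutelyContinuousOnInterval_comp_of_contDiffOn {K : ℝ≥0} {φ : ℝ → ℝ}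
    (hφ : ContDiffOn ℝ 1 φ (f '' uIcc x y)) (hf : LipschitzOnWith K f (uIcc x y)) :
    AbsolutelyContinuousOnInterval (φ ∘ f) x y := by
  have hconvex : Convex ℝ (f '' uIcc x y) :=
    (isPreconnected_uIcc.image f hf.continuousOn).ordConnected.convex
  obtain ⟨L, hL⟩ := hφ.exists_lipschitzOnWith one_ne_zero hconvex
    (isCompact_uIcc.image_of_continuousOn hf.continuousOn)
  exact (hL.comp hf (mapsTo_image f _)).absolutelyContinuousOnInterval

lemma aestronglyMeasurable_of_ae_hasDerivAt {μ : Measure ℝ}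
    (hderiv : ∀ᵐ t ∂μ, HasDerivAt f (f' t) t) : AEStronglyMeasurable f' μ :=
  (aestronglyMeasurable_deriv f μ).congr (hderiv.mono fun _ ht ↦ ht.deriv)

lemma intervalIntegrable_of_ae_hasDerivAt (hf : AbsolutelyContinuousOnInterval f x y)
    (hderiv : ∀ᵐ t ∂volume.restrict (uIoc x y), HasDerivAt f (f' t) t) :
    IntervalIntegrable f' volume x y :=
  hf.intervalIntegrable_deriv.congr_ae (hderiv.mono fun _ ht ↦ ht.deriv)

lemma integral_eq_sub_of_ae_hasDerivAt (hf : AbsolutelyContinuousOnInterval f x y)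
    (hderiv : ∀ᵐ t ∂volume.restrict (uIoc x y), HasDerivAt f (f' t) t) :
    ∫ t in x..y, f' t = f y - f x := by
  rw [← hf.integral_deriv_eq_sub]
  exact intervalIntegral.integral_congr_ae_restrict (hderiv.mono fun _ ht ↦ ht.deriv.symm)

lemma integrableOn_Ioc_and_setIntegral_eq_sub_of_ae_hasDerivAt (hxy : x < y)
    (hcont : ContinuousWithinAt f (Ioi x) x)
    (hac : ∀ e ∈ Ioo x y, AbsolutelyContinuousOnInterval f e y)
    (hderiv : ∀ᵐ t ∂volume.restrict (Ioc x y), HasDerivAt f (f' t) t)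
    (hnonneg : ∀ᵐ t ∂volume.restrict (Ioc x y), 0 ≤ f' t) :
    IntegrableOn f' (Ioc x y) ∧ ∫ t in Ioc x y, f' t = f y - f x := by
  obtain ⟨e, -, he, hetendsto⟩ := exists_seq_strictAnti_tendsto' hxy
  have hsub (k : ℕ) : Ioc (e k) y ⊆ Ioc x y := Ioc_subset_Ioc_left (he k).1.le
  have hrestrict (k : ℕ) :
      (volume.restrict (Ioc x y)).restrict (Ioc (e k) y) = volume.restrict (Ioc (e k) y) :=
    Measure.restrict_restrict_of_subset (hsub k)
  have hderivOn (k : ℕ) : ∀ᵐ t ∂volume.restrict (uIoc (e k) y), HasDerivAt f (f' t) t := by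
    rw [uIoc_of_le (he k).2.le]
    exact ae_restrict_of_ae_restrict_of_subset (hsub k) hderiv
  have hint (k : ℕ) : IntegrableOn f' (Ioc (e k) y) (volume.restrict (Ioc x y)) := by
    rw [IntegrableOn, hrestrict]
    exact (intervalIntegrable_of_ae_hasDerivAt (hac _ (he k)) (hderivOn k)).1
  have hvalue (k : ℕ) :
      ∫ t in Ioc (e k) y, f' t ∂volume.restrict (Ioc x y) = f y - f (e k) := by
    rw [hrestrict, ← intervalIntegral.integral_of_le (he k).2.le,
      integral_eq_sub_of_ae_hasDerivAt (hac _ (he k)) (hderivOn k)]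
  have hlim : Tendsto (fun k ↦ ∫ t in Ioc (e k) y, f' t ∂volume.restrict (Ioc x y)) atTop
      (𝓝 (f y - f x)) := by
    simp_rw [hvalue]
    exact tendsto_const_nhds.sub <| hcont.tendsto.comp <|
      tendsto_nhdsWithin_iff.2 ⟨hetendsto, .of_forall fun k ↦ (he k).1⟩
  have hcover : AECover (volume.restrict (Ioc x y)) atTop fun k ↦ Ioc (e k) y :=
    aecover_Ioc_of_Ioc hetendsto tendsto_const_nhds
  exact ⟨hcover.integrable_of_integral_tendsto_of_nonneg_ae _ hint hnonneg hlim,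
    hcover.integral_eq_of_tendsto_of_nonneg_ae _ hnonneg hint hlim⟩

lemma integrableOn_Ioo_of_ae_hasDerivAt (hxy : x ≤ y)
    (hf : AbsolutelyContinuousOnInterval f x y)
    (hderiv : ∀ᵐ t ∂volume.restrict (Ioo x y), HasDerivAt f (f' t) t) :
    IntegrableOn f' (Ioo x y) := by
  rw [Measure.restrict_congr_set Ioo_ae_eq_Ioc, ← uIoc_of_le hxy] at hderiv
  exact (intervalIntegrable_iff_integrableOn_Ioo_of_le hxy).1
    (intervalIntegrable_of_ae_hasDerivAt hf hderiv)

lemma setIntegral_Ioo_indicator_Iic_of_ae_hasDerivAt {r : ℝ} (hr : r ∈ Icc x y)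
    (hf : AbsolutelyContinuousOnInterval f x y)
    (hderiv : ∀ᵐ t ∂volume.restrict (Ioo x y), HasDerivAt f (f' t) t) :
    ∫ t in Ioo x y, (Iic r).indicator f' t = f r - f x := by
  have hac : AbsolutelyContinuousOnInterval f x r :=
    hf.mono (uIcc_subset_uIcc left_mem_uIcc (Icc_subset_uIcc hr))
  rw [Measure.restrict_congr_set Ioo_ae_eq_Ioc] at hderiv
  rw [← integral_Ioc_eq_integral_Ioo, setIntegral_indicator measurableSet_Iic, Ioc_inter_Iic,
    min_eq_right hr.2, ← intervalIntegral.integral_of_le hr.1]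
  refine integral_eq_sub_of_ae_hasDerivAt hac ?_
  rw [uIoc_of_le hr.1]
  exact ae_restrict_of_ae_restrict_of_subset (Ioc_subset_Ioc_right hr.2) hderiv

end FundamentalTheorem

/-- The function `h(r) = r - δ(r)`, the gap between the diagonal section and the identity. -/
def diagonalGap (δ : ℝ → ℝ) (r : ℝ) : ℝ := r - δ r

/-- The function `F(r) = ((D - 1) / D) ∫_{1/2}^r ds / h(s)`. The dimension `D` is a real parameter
here and below. -/
noncomputable def diagonalExponent (D : ℝ) (δ : ℝ → ℝ) (r : ℝ) : ℝ :=
  ((D - 1) / D) * ∫ s in (1 / 2 : ℝ)..r, 1 / diagonalGap δ s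

/-- The function `a`, the factor of `c_δ` at a non-maximal coordinate; `δ'` stands for a version of
the derivative of `δ`. -/
noncomputable def coordDensity (D : ℝ) (δ δ' : ℝ → ℝ) (r : ℝ) : ℝ :=
  ((D - δ' r) / D) * diagonalGap δ r ^ (-1 + 1 / D) * Real.exp (diagonalExponent D δ r)

/-- The function `b`, the factor of `c_δ` at the maximal coordinate; `δ'` stands for a version of
the derivative of `δ`. -/
noncomputable def maxDensity (D : ℝ) (δ δ' : ℝ → ℝ) (r : ℝ) : ℝ :=
  (δ' r / D) * diagonalGap δ r ^ (-1 + 1 / D) * Real.exp (-(D - 1) * diagonalExponent D δ r)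

/-- The function `A(r) = h(r)^(1/D) exp(F(r))`, the closed form of `∫_0^r a`. -/
noncomputable def coordPrimitive (D : ℝ) (δ : ℝ → ℝ) (r : ℝ) : ℝ :=
  diagonalGap δ r ^ (1 / D) * Real.exp (diagonalExponent D δ r)

section Diagonal

variable {D t : ℝ} {δ δ' : ℝ → ℝ} {K : ℝ≥0}

lemma diagonalGap_pos (hlt : ∀ t ∈ Ioo (0 : ℝ) 1, δ t < t) (ht : t ∈ Ioo (0 : ℝ) 1) :
    0 < diagonalGap δ t :=
  sub_pos.2 (hlt t ht)

lemma lipschitzOnWith_diagonalGap {s : Set ℝ} (hlip : LipschitzOnWith K δ s) :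
    LipschitzOnWith (1 + K) (diagonalGap δ) s :=
  LipschitzWith.id.lipschitzOnWith.sub hlip

lemma continuousOn_diagonalGap {s : Set ℝ} (hcont : ContinuousOn δ s) :
    ContinuousOn (diagonalGap δ) s :=
  continuousOn_id.sub hcont

lemma continuousOn_one_div_diagonalGap (hcont : ContinuousOn δ (Ioo 0 1))
    (hlt : ∀ t ∈ Ioo (0 : ℝ) 1, δ t < t) :
    ContinuousOn (fun s ↦ 1 / diagonalGap δ s) (Ioo 0 1) :=
  continuousOn_const.div (continuousOn_diagonalGap hcont) fun _ hs ↦ (diagonalGap_pos hlt hs).ne'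

lemma hasDerivAt_diagonalExponent (hcont : ContinuousOn δ (Ioo 0 1))
    (hlt : ∀ t ∈ Ioo (0 : ℝ) 1, δ t < t) (ht : t ∈ Ioo (0 : ℝ) 1) :
    HasDerivAt (diagonalExponent D δ) ((D - 1) / D * (1 / diagonalGap δ t)) t := by
  have hinv := continuousOn_one_div_diagonalGap hcont hlt
  have hsub : uIcc (1 / 2 : ℝ) t ⊆ Ioo 0 1 := ordConnected_Ioo.uIcc_subset (by norm_num) ht
  exact (intervalIntegral.integral_hasDerivAt_right (hinv.mono hsub).intervalIntegrable
    (hinv.stronglyMeasurableAtFilter isOpen_Ioo t ht)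
    (hinv.continuousAt (isOpen_Ioo.mem_nhds ht))).const_mul _

lemma contDiffOn_diagonalExponent (hcont : ContinuousOn δ (Ioo 0 1))
    (hlt : ∀ t ∈ Ioo (0 : ℝ) 1, δ t < t) : ContDiffOn ℝ 1 (diagonalExponent D δ) (Ioo 0 1) := by
  have hderiv (s : ℝ) (hs : s ∈ Ioo (0 : ℝ) 1) := hasDerivAt_diagonalExponent (D := D) hcont hlt hs
  rw [← zero_add (1 : WithTop ℕ∞), contDiffOn_succ_iff_deriv_of_isOpen isOpen_Ioo]
  refine ⟨fun s hs ↦ (hderiv s hs).differentiableAt.differentiableWithinAt, by simp, ?_⟩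
  rw [contDiffOn_zero]
  exact (continuousOn_const.mul (continuousOn_one_div_diagonalGap hcont hlt)).congr
    fun s hs ↦ (hderiv s hs).deriv

lemma diagonalExponent_nonpos (hD : 1 ≤ D) (hlt : ∀ t ∈ Ioo (0 : ℝ) 1, δ t < t)
    (ht : t ∈ Ioc (0 : ℝ) (1 / 2)) : diagonalExponent D δ t ≤ 0 := by
  refine mul_nonpos_of_nonneg_of_nonpos (div_nonneg (by linarith) (by linarith)) ?_
  rw [intervalIntegral.integral_symm, neg_nonpos]
  refine intervalIntegral.integral_nonneg ht.2 fun s hs ↦ one_div_nonneg.2 ?_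
  exact (diagonalGap_pos hlt ⟨ht.1.trans_le hs.1, by linarith [hs.2]⟩).le

lemma coordDensity_nonneg (hD : 0 ≤ D) (hlt : ∀ t ∈ Ioo (0 : ℝ) 1, δ t < t)
    (ht : t ∈ Ioo (0 : ℝ) 1) (hδ' : δ' t ≤ D) : 0 ≤ coordDensity D δ δ' t := by
  have hgap := diagonalGap_pos hlt ht
  have := sub_nonneg.2 hδ'
  unfold coordDensity
  positivity

lemma hasDerivAt_coordPrimitive (hD : D ≠ 0) (hcont : ContinuousOn δ (Ioo 0 1))
    (hlt : ∀ t ∈ Ioo (0 : ℝ) 1, δ t < t) (ht : t ∈ Ioo (0 : ℝ) 1)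
    (hderiv : HasDerivAt δ (δ' t) t) :
    HasDerivAt (coordPrimitive D δ) (coordDensity D δ δ' t) t := by
  have hgap := (diagonalGap_pos hlt ht).ne'
  have hgapDeriv : HasDerivAt (diagonalGap δ) (1 - δ' t) t := (hasDerivAt_id t).sub hderiv
  refine ((hgapDeriv.rpow_const (p := 1 / D) (.inl hgap)).mul
    (hasDerivAt_diagonalExponent hcont hlt ht).exp).congr_deriv ?_
  have hpow : diagonalGap δ t ^ (1 / D) = diagonalGap δ t ^ (-1 + 1 / D) * diagonalGap δ t := by
    rw [← Real.rpow_add_one hgap]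
    ring_nf
  rw [coordDensity, hpow, ← neg_add_eq_sub 1 (1 / D)]
  field_simp
  ring

lemma absolutelyContinuousOnInterval_coordPrimitive (hlip : LipschitzOnWith K δ (Icc 0 1))
    (hlt : ∀ t ∈ Ioo (0 : ℝ) 1, δ t < t) {e : ℝ} (he : e ∈ Ioo (0 : ℝ) 1)
    (ht : t ∈ Ioo (0 : ℝ) 1) : AbsolutelyContinuousOnInterval (coordPrimitive D δ) e t := by
  have hsub : uIcc e t ⊆ Ioo 0 1 := ordConnected_Ioo.uIcc_subset he ht
  have hpow : ContDiffOn ℝ 1 (fun z : ℝ ↦ z ^ (1 / D)) (diagonalGap δ '' uIcc e t) := by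
    rintro _ ⟨s, hs, rfl⟩
    exact (Real.contDiffAt_rpow_const_of_ne
      (diagonalGap_pos hlt (hsub hs)).ne').contDiffWithinAt
  have hgap : LipschitzOnWith (1 + K) (diagonalGap δ) (uIcc e t) :=
    lipschitzOnWith_diagonalGap (hlip.mono (hsub.trans Ioo_subset_Icc_self))
  have hexp : ContDiffOn ℝ 1 (diagonalExponent D δ) (uIcc e t) :=
    (contDiffOn_diagonalExponent (hlip.continuousOn.mono Ioo_subset_Icc_self) hlt).mono hsub
  exact (absolutelyContinuousOnInterval_comp_of_contDiffOn hpow hgap).mul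
    hexp.exp.absolutelyContinuousOnInterval

lemma coordPrimitive_nonneg (hlt : ∀ t ∈ Ioo (0 : ℝ) 1, δ t < t) (ht : t ∈ Ioo (0 : ℝ) 1) :
    0 ≤ coordPrimitive D δ t := by
  have hgap := diagonalGap_pos hlt ht
  unfold coordPrimitive
  positivity

lemma coordPrimitive_zero (hD : D ≠ 0) (h0 : δ 0 = 0) : coordPrimitive D δ 0 = 0 := by
  simp [coordPrimitive, diagonalGap, h0, hD]

lemma continuousWithinAt_coordPrimitive_zero (hD : 1 ≤ D) (hcont : ContinuousOn δ (Icc 0 1))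
    (h0 : δ 0 = 0) (hlt : ∀ t ∈ Ioo (0 : ℝ) 1, δ t < t) :
    ContinuousWithinAt (coordPrimitive D δ) (Ioi 0) 0 := by
  have hD0 : 0 < D := by linarith
  have hgap : Tendsto (fun e ↦ diagonalGap δ e ^ (1 / D)) (𝓝[>] 0) (𝓝 0) := by
    have hc : ContinuousWithinAt (diagonalGap δ) (Ioi 0) 0 :=
      (continuousOn_diagonalGap hcont 0 (by simp)).mono_of_mem_nhdsWithin
        (Icc_mem_nhdsGT one_pos)
    simpa [diagonalGap, h0, hD0.ne'] using
      (hc.rpow_const (.inr (one_div_nonneg.2 hD0.le))).tendsto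
  rw [ContinuousWithinAt, coordPrimitive_zero hD0.ne' h0]
  have hmem : ∀ᶠ e in 𝓝[>] (0 : ℝ), e ∈ Ioc (0 : ℝ) (1 / 2) := Ioc_mem_nhdsGT (by norm_num)
  have hsub : Ioc (0 : ℝ) (1 / 2) ⊆ Ioo 0 1 := Ioc_subset_Ioo_right (by norm_num)
  refine squeeze_zero' (hmem.mono fun e he ↦ coordPrimitive_nonneg hlt (hsub he))
    (hmem.mono fun e he ↦ ?_) hgap
  exact mul_le_of_le_one_right (Real.rpow_nonneg (diagonalGap_pos hlt (hsub he)).le _)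
    (Real.exp_le_one_iff.2 (diagonalExponent_nonpos hD hlt he))

lemma maxDensity_mul_coordPrimitive_pow {n : ℕ} (hlt : ∀ t ∈ Ioo (0 : ℝ) 1, δ t < t)
    (ht : t ∈ Ioo (0 : ℝ) 1) :
    maxDensity (n + 1) δ δ' t * coordPrimitive (n + 1) δ t ^ n = δ' t / (n + 1) := by
  have hgap := diagonalGap_pos hlt ht
  have hpow : diagonalGap δ t ^ (-1 + 1 / (n + 1 : ℝ)) * (diagonalGap δ t ^ (1 / (n + 1 : ℝ))) ^ n
      = 1 := by
    rw [← Real.rpow_mul_natCast hgap.le, ← Real.rpow_add hgap,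
      show -1 + 1 / (n + 1 : ℝ) + 1 / (n + 1) * n = 0 by field_simp; ring, Real.rpow_zero]
  have hexp : Real.exp (-(n + 1 - 1) * diagonalExponent (n + 1) δ t) *
      Real.exp (diagonalExponent (n + 1) δ t) ^ n = 1 := by
    rw [← Real.exp_nat_mul, ← Real.exp_add, Real.exp_eq_one_iff]
    ring
  rw [maxDensity, coordPrimitive, mul_pow, mul_mul_mul_comm, mul_assoc (δ' t / (n + 1)), hpow, hexp,
    mul_one, mul_one]

lemma indicator_Iic_maxDensity_mul_coordPrimitive_pow {n : ℕ} {r : ℝ}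
    (hlt : ∀ t ∈ Ioo (0 : ℝ) 1, δ t < t) (ht : t ∈ Ioo (0 : ℝ) 1) :
    (Iic r).indicator (maxDensity (n + 1) δ δ') t * coordPrimitive (n + 1) δ t ^ n =
      (Iic r).indicator δ' t / (n + 1) := by
  by_cases htr : t ∈ Iic r
  · simp only [indicator_of_mem htr, maxDensity_mul_coordPrimitive_pow hlt ht]
  · simp only [indicator_of_notMem htr, zero_mul, zero_div]

lemma aestronglyMeasurable_coordDensity (hcont : ContinuousOn δ (Ioo 0 1))
    (hlt : ∀ t ∈ Ioo (0 : ℝ) 1, δ t < t)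
    (hδ' : AEStronglyMeasurable δ' (volume.restrict (Ioo 0 1))) :
    AEStronglyMeasurable (coordDensity D δ δ') (volume.restrict (Ioo 0 1)) := by
  have hgap := (continuousOn_diagonalGap hcont).aemeasurable (μ := volume) measurableSet_Ioo
  have hexp := (contDiffOn_diagonalExponent (D := D) hcont hlt).continuousOn.aemeasurable
    (μ := volume) measurableSet_Ioo
  have hδ'm := hδ'.aemeasurable
  unfold coordDensity
  exact AEMeasurable.aestronglyMeasurable (by fun_prop)

lemma aestronglyMeasurable_maxDensity (hcont : ContinuousOn δ (Ioo 0 1))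
    (hlt : ∀ t ∈ Ioo (0 : ℝ) 1, δ t < t)
    (hδ' : AEStronglyMeasurable δ' (volume.restrict (Ioo 0 1))) :
    AEStronglyMeasurable (maxDensity D δ δ') (volume.restrict (Ioo 0 1)) := by
  have hgap := (continuousOn_diagonalGap hcont).aemeasurable (μ := volume) measurableSet_Ioo
  have hexp := (contDiffOn_diagonalExponent (D := D) hcont hlt).continuousOn.aemeasurable
    (μ := volume) measurableSet_Ioo
  have hδ'm := hδ'.aemeasurable
  unfold maxDensity
  exact AEMeasurable.aestronglyMeasurable (by fun_prop)

lemma integrableOn_coordDensity_and_setIntegral_eq (hD : 1 ≤ D)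
    (hlip : LipschitzOnWith K δ (Icc 0 1)) (h0 : δ 0 = 0) (hlt : ∀ t ∈ Ioo (0 : ℝ) 1, δ t < t)
    (hderiv : ∀ᵐ t ∂volume.restrict (Ioo (0 : ℝ) 1), HasDerivAt δ (δ' t) t)
    (hδ' : ∀ᵐ t ∂volume.restrict (Ioo (0 : ℝ) 1), δ' t ≤ D) (ht : t ∈ Ioo (0 : ℝ) 1) :
    IntegrableOn (coordDensity D δ δ') (Ioo 0 t) ∧
      ∫ s in Ioo 0 t, coordDensity D δ δ' s = coordPrimitive D δ t := by
  have hD0 : 0 < D := by linarith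
  have hsub : Ioc 0 t ⊆ Ioo 0 1 := Ioc_subset_Ioo_right ht.2
  have hcont : ContinuousOn δ (Ioo 0 1) := hlip.continuousOn.mono Ioo_subset_Icc_self
  have hprim : ∀ᵐ s ∂volume.restrict (Ioc 0 t),
      HasDerivAt (coordPrimitive D δ) (coordDensity D δ δ' s) s := by
    filter_upwards [ae_restrict_of_ae_restrict_of_subset hsub hderiv,
      ae_restrict_mem measurableSet_Ioc] with s hs hmem
    exact hasDerivAt_coordPrimitive hD0.ne' hcont hlt (hsub hmem) hs
  have hnonneg : ∀ᵐ s ∂volume.restrict (Ioc 0 t), 0 ≤ coordDensity D δ δ' s := by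
    filter_upwards [ae_restrict_of_ae_restrict_of_subset hsub hδ',
      ae_restrict_mem measurableSet_Ioc] with s hs hmem
    exact coordDensity_nonneg hD0.le hlt (hsub hmem) hs
  rw [← integrableOn_Ioc_iff_integrableOn_Ioo, ← integral_Ioc_eq_integral_Ioo]
  simpa only [coordPrimitive_zero hD0.ne' h0, sub_zero] using
    integrableOn_Ioc_and_setIntegral_eq_sub_of_ae_hasDerivAt ht.1
    (continuousWithinAt_coordPrimitive_zero hD hlip.continuousOn h0 hlt)
    (fun e he ↦ absolutelyContinuousOnInterval_coordPrimitive hlip hlt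
      ⟨he.1, he.2.trans ht.2⟩ ht) hprim hnonneg

lemma setIntegral_norm_coordDensity (hD : 1 ≤ D)
    (hlip : LipschitzOnWith K δ (Icc 0 1)) (h0 : δ 0 = 0) (hlt : ∀ t ∈ Ioo (0 : ℝ) 1, δ t < t)
    (hderiv : ∀ᵐ t ∂volume.restrict (Ioo (0 : ℝ) 1), HasDerivAt δ (δ' t) t)
    (hδ' : ∀ᵐ t ∂volume.restrict (Ioo (0 : ℝ) 1), δ' t ≤ D) (ht : t ∈ Ioo (0 : ℝ) 1) :
    ∫ s in Ioo 0 t, ‖coordDensity D δ δ' s‖ = coordPrimitive D δ t := by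
  rw [← (integrableOn_coordDensity_and_setIntegral_eq hD hlip h0 hlt hderiv hδ' ht).2]
  have hsub : Ioo 0 t ⊆ Ioo 0 1 := Ioo_subset_Ioo_right ht.2.le
  refine integral_congr_ae ?_
  filter_upwards [ae_restrict_of_ae_restrict_of_subset hsub hδ',
    ae_restrict_mem measurableSet_Ioo] with s hs hmem
  exact Real.norm_of_nonneg (coordDensity_nonneg (by linarith) hlt (hsub hmem) hs)

theorem integral_maxProd_coordDensity_maxDensity {n : ℕ} (hlip : LipschitzOnWith K δ (Icc 0 1))
    (h0 : δ 0 = 0) (hlt : ∀ t ∈ Ioo (0 : ℝ) 1, δ t < t)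
    (hderiv : ∀ᵐ t ∂volume.restrict (Ioo (0 : ℝ) 1), HasDerivAt δ (δ' t) t)
    (hδ' : ∀ᵐ t ∂volume.restrict (Ioo (0 : ℝ) 1), δ' t ≤ n + 1) {r : ℝ}
    (hr : r ∈ Icc (0 : ℝ) 1) :
    ∫ u : Fin (n + 1) → ℝ, maxProd (coordDensity (n + 1) δ δ')
      ((Iic r).indicator (maxDensity (n + 1) δ δ')) u
      ∂Measure.pi (fun _ ↦ volume.restrict (Ioo 0 1)) = δ r := by
  have hD : (1 : ℝ) ≤ n + 1 := by simp
  have hcont : ContinuousOn δ (Ioo 0 1) := hlip.continuousOn.mono Ioo_subset_Icc_self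
  have hac : AbsolutelyContinuousOnInterval δ 0 1 :=
    LipschitzOnWith.absolutelyContinuousOnInterval (by rwa [uIcc_of_le zero_le_one])
  have hmeas := aestronglyMeasurable_of_ae_hasDerivAt hderiv
  have hprim (t : ℝ) (ht : t ∈ Ioo (0 : ℝ) 1) :=
    integrableOn_coordDensity_and_setIntegral_eq hD hlip h0 hlt hderiv hδ' ht
  rw [integral_maxProd (aestronglyMeasurable_coordDensity hcont hlt hmeas)
    ((aestronglyMeasurable_maxDensity hcont hlt hmeas).indicator measurableSet_Iic)]
  · rw [setIntegral_congr_fun (g := fun t ↦ (Iic r).indicator δ' t / (n + 1)) measurableSet_Ioo,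
      integral_div, setIntegral_Ioo_indicator_Iic_of_ae_hasDerivAt hr hac hderiv, h0, sub_zero,
      mul_div_cancel₀ _ (by positivity)]
    intro t ht
    simp only [restrict_Iio_restrict_Ioo _ ht.2.le, (hprim t ht).2,
      indicator_Iic_maxDensity_mul_coordPrimitive_pow hlt ht]
  · filter_upwards [ae_restrict_mem measurableSet_Ioo] with t ht
    rw [IntegrableOn, restrict_Iio_restrict_Ioo _ ht.2.le]
    exact (hprim t ht).1
  · have hint : IntegrableOn ((Iic r).indicator δ') (Ioo 0 1) :=
      (integrableOn_Ioo_of_ae_hasDerivAt zero_le_one hac hderiv).indicator measurableSet_Iic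
    refine (hint.div_const (n + 1 : ℝ)).norm.congr ?_
    filter_upwards [ae_restrict_mem measurableSet_Ioo] with t ht
    rw [restrict_Iio_restrict_Ioo _ ht.2.le,
      setIntegral_norm_coordDensity hD hlip h0 hlt hderiv hδ' ht,
      ← indicator_Iic_maxDensity_mul_coordPrimitive_pow hlt ht, norm_mul,
      Real.norm_of_nonneg (pow_nonneg (coordPrimitive_nonneg hlt ht) n)]

end Diagonal

theorem c_delta_diagonal_section_general
    (d : ℕ) (hd : d ≠ 0) (δ δ' : ℝ → ℝ) (K : ℝ≥0)
    (hlip : LipschitzOnWith K δ (Icc 0 1))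
    (h0 : δ 0 = 0)
    (hlt : ∀ t ∈ Ioo (0 : ℝ) 1, δ t < t)
    (hderiv : ∀ᵐ t ∂volume.restrict (Icc (0 : ℝ) 1), HasDerivAt δ (δ' t) t)
    (hδ' : ∀ᵐ t ∂volume.restrict (Icc (0 : ℝ) 1), δ' t ≤ d)
    (h F a b : ℝ → ℝ)
    (hh : ∀ r, h r = r - δ r)
    (hF : ∀ r, F r = (((d : ℝ) - 1) / d) * ∫ s in (1 / 2 : ℝ)..r, 1 / h s)
    (ha : ∀ r, a r = (((d : ℝ) - δ' r) / d) * h r ^ (-1 + 1 / (d : ℝ)) * Real.exp (F r))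
    (hb : ∀ r, b r = (δ' r / d) * h r ^ (-1 + 1 / (d : ℝ)) * Real.exp (-((d : ℝ) - 1) * F r))
    (c : (Fin d → ℝ) → ℝ)
    (hc : ∀ x, c x = b (⨆ i, x i) * ∏ i with x i ≠ ⨆ j, x j, a (x i)) :
    ∀ r ∈ Icc (0 : ℝ) 1,
      (∫ u in univ.pi fun _ : Fin d ↦ Icc (0 : ℝ) 1,
        c u * if (⨆ i, u i) ≤ r then 1 else 0) = δ r := by
  intro r hr
  obtain ⟨n, rfl⟩ := Nat.exists_eq_succ_of_ne_zero hd
  obtain rfl : h = diagonalGap δ := funext hh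
  obtain rfl : F = diagonalExponent (n + 1) δ := by ext; simp [hF, diagonalExponent]
  obtain rfl : a = coordDensity (n + 1) δ δ' := by ext; simp [ha, coordDensity]
  obtain rfl : b = maxDensity (n + 1) δ δ' := by ext; simp [hb, maxDensity]
  have hintegrand (u : Fin (n + 1) → ℝ) : (c u * if (⨆ i, u i) ≤ r then 1 else 0) =
      maxProd (coordDensity (n + 1) δ δ') ((Iic r).indicator (maxDensity (n + 1) δ δ')) u := by
    simp [hc, maxProd, indicator_apply]
  simp_rw [hintegrand]
  rw [volume_pi, Measure.restrict_pi_pi]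
  rw [← Measure.restrict_congr_set Ioo_ae_eq_Icc] at hderiv hδ' ⊢
  exact integral_maxProd_coordDensity_maxDensity hlip h0 hlt hderiv (by simpa using hδ') hr

/-- The copula with density c_δ has diagonal section δ:
∫ c_δ(u) 1{max(u) ≤ r} du = δ(r) for all r ∈ [0,1]. -/
theorem c_delta_diagonal_section
    (d : ℕ) (hd : 2 ≤ d) (δ δ' : ℝ → ℝ)
    (hmono : MonotoneOn δ (Set.Icc 0 1))
    (hlip : ∀ s ∈ Set.Icc (0:ℝ) 1, ∀ t ∈ Set.Icc (0:ℝ) 1,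
      |δ s - δ t| ≤ (d : ℝ) * |s - t|)
    (h0 : δ 0 = 0) (h1 : δ 1 = 1)
    (hlt : ∀ t ∈ Set.Ioo (0:ℝ) 1, δ t < t)
    (hderiv : ∀ᵐ t ∂(volume.restrict (Set.Icc (0:ℝ) 1)), HasDerivAt δ (δ' t) t)
    (hd' : ∀ t ∈ Set.Icc (0:ℝ) 1, δ' t ∈ Set.Icc (0:ℝ) (d:ℝ))
    (h F a b : ℝ → ℝ)
    (hh : ∀ r, h r = r - δ r)
    (hF : ∀ r, F r = (((d:ℝ) - 1) / d) * ∫ s in (1/2 : ℝ)..r, 1 / h s)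
    (ha : ∀ r, a r = (((d:ℝ) - δ' r) / d) * h r ^ (-1 + 1/(d:ℝ)) * Real.exp (F r))
    (hb : ∀ r, b r = (δ' r / d) * h r ^ (-1 + 1/(d:ℝ)) *
      Real.exp (-((d:ℝ) - 1) * F r))
    (c : (Fin d → ℝ) → ℝ)
    (hc : ∀ x, c x = b (⨆ i, x i) *
      ∏ i ∈ Finset.univ.filter (fun i => x i ≠ ⨆ j, x j), a (x i)) :
    ∀ r ∈ Set.Icc (0:ℝ) 1,
      (∫ u in Set.univ.pi (fun _ : Fin d => Set.Icc (0:ℝ) 1),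
        c u * (if (⨆ i, u i) ≤ r then 1 else 0)) = δ r := by
  have hlipOn : LipschitzOnWith d δ (Icc 0 1) :=
    .of_dist_le_mul fun s hs t ht ↦ by simpa [Real.dist_eq] using hlip s hs t ht
  exact c_delta_diagonal_section_general d (by lia) δ δ' d hlipOn h0 hlt hderiv
    (ae_restrict_of_forall_mem measurableSet_Icc fun t ht ↦ (hd' t ht).2) h F a b hh hF ha hb c hc
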